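/- Let d₁, d₂ be positive integers, N = d₁d₂, and let U be Haar-distributed on the unitary group U(N). With ρ₀ the partial trace over the second factor of the projector onto the 0-th column of U, one has E[(Tr ρ₀²)²] = (d₂d₁³ + 2(d₂²+2)d₁² + d₂(d₂²+10)d₁ + 4d₂² + 2) / ((d₁d₂+1)(d₁d₂+2)(d₁d₂+3)). -/

import Mathlib

/-!
The first column `x` of a Haar unitary is a random unit vector whose law is invariant under
`x ↦ exp (tA) x` for every skew-Hermitian `A`. Differentiating the integral of a monomial in the
entries of `x` and of `conj x` at `t = 0` gives a linear relation between moments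
(`integral_flowDeriv_skew`). The relation is complex linear in `A`, so it holds for all matrices
`A` (`integral_flowDeriv`). Taking `A` to be the matrix unit `E_{pq}`, starting from a monomial
containing `x_p`, and summing over `p` with `∑ |x_p|² = 1`, yields a Wick-type recursion
(`schwinger_dyson`): for `m` of degree `n` in the `x`'s and `m'` a monomial in the conjugates,
`(N + n) E[x_q m m'] = E[m ∂m'/∂(conj x_q)]`.

Write `x` as a `d₁ × d₂` matrix `X`, so that `ρ₀ = X X*`. Applying the recursion to one factor `X`
contracts it with each factor `X*` in turn; with `Tr ρ₀ = 1` this gives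
* `(N + 1) E[Tr ρ₀²] = d₁ + d₂` (`integral_tr2`),
* `(N + 2) E[Tr ρ₀³] = (d₁ + d₂) E[Tr ρ₀²] + 1` (`integral_tr3`),
* `(N + 3) E[(Tr ρ₀²)²] = (d₁ + d₂) E[Tr ρ₀²] + 2 E[Tr ρ₀³]` (`integral_tr2_mul_tr2`),

and eliminating the lower moments from this triangular system gives the formula.
-/

open Matrix MeasureTheory

instance matrixMeasurableSpace {m n α : Type*} [MeasurableSpace α] :
    MeasurableSpace (Matrix m n α) :=
  inferInstanceAs (MeasurableSpace (m → n → α))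

/-- For a unitary matrix `U` of size `d₁d₂` and a column index `i`, `rho U i` is the
partial trace over the second tensor factor of the rank-one projector onto the `i`-th
column of `U`: `(rho U i) a b = ∑ k, U_{(a,k),i} * conj (U_{(b,k),i})`. -/
noncomputable def rho {d₁ d₂ : ℕ} (U : Matrix.unitaryGroup (Fin (d₁ * d₂)) ℂ)
    (i : Fin (d₁ * d₂)) : Matrix (Fin d₁) (Fin d₁) ℂ :=
  Matrix.of fun a b => ∑ k : Fin d₂,
    (U : Matrix (Fin (d₁ * d₂)) (Fin (d₁ * d₂)) ℂ) (finProdFinEquiv (a, k)) i *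
      (starRingEnd ℂ) ((U : Matrix (Fin (d₁ * d₂)) (Fin (d₁ * d₂)) ℂ) (finProdFinEquiv (b, k)) i)

/-! ### One-parameter unitary groups and the topology of the unitary group -/

section Exp
-- Any normed algebra structure on matrices serves here: only entrywise derivatives are exported.
attribute [local instance] Matrix.linftyOpNormedRing Matrix.linftyOpNormedAlgebra

/-- The flow is `t ↦ exp (t • A)`; its derivative is recorded entrywise so that no norm on matrices
is mentioned. -/
lemma exists_unitary_flow {ι : Type*} [Fintype ι] [DecidableEq ι] (A : Matrix ι ι ℂ)
    (hA : Aᴴ = -A) :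
    ∃ V : ℝ → Matrix.unitaryGroup ι ℂ, V 0 = 1 ∧ ∀ t i j,
      HasDerivAt (fun s => (V s : Matrix ι ι ℂ) i j) ((A * (V t : Matrix ι ι ℂ)) i j) t := by
  have hmem : ∀ t : ℝ, NormedSpace.exp (t • A) ∈ Matrix.unitaryGroup ι ℂ := by
    intro t
    have h : (t • A)ᴴ = -(t • A) := by
      rw [Matrix.conjTranspose_smul, hA]; simp
    rw [Matrix.mem_unitaryGroup_iff', Matrix.star_eq_conjTranspose, ← Matrix.exp_conjTranspose,
      h, ← Matrix.exp_add_of_commute _ _ (Commute.refl (t • A)).neg_left]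
    simp
  refine ⟨fun t => ⟨_, hmem t⟩, ?_, ?_⟩
  · ext i j
    simp
  · intro t i j
    have h := hasDerivAt_exp_smul_const' (𝕂 := ℝ) A t
    exact hasDerivAt_pi.1 (hasDerivAt_pi.1 h i) j

end Exp

instance matrix_borelSpace {m n : Type*} [Countable m] [Countable n] :
    BorelSpace (Matrix m n ℂ) :=
  inferInstanceAs (BorelSpace (m → n → ℂ))

instance unitaryGroup_borelSpace {ι : Type*} [Fintype ι] [DecidableEq ι] :
    BorelSpace (Matrix.unitaryGroup ι ℂ) :=
  Subtype.borelSpace _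

instance unitaryGroup_compactSpace {ι : Type*} [Fintype ι] [DecidableEq ι] :
    CompactSpace (Matrix.unitaryGroup ι ℂ) := by
  refine isCompact_iff_compactSpace.1 (?_ : IsCompact (Matrix.unitaryGroup ι ℂ : Set (Matrix ι ι ℂ)))
  have hK : IsCompact (Set.univ.pi fun _ : ι => Set.univ.pi fun _ : ι =>
      Metric.closedBall (0 : ℂ) 1) :=
    isCompact_univ_pi fun _ => isCompact_univ_pi fun _ => isCompact_closedBall _ _
  refine IsCompact.of_isClosed_subset (X := Matrix ι ι ℂ) hK
    (isClosed_unitary (R := Matrix ι ι ℂ)) ?_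
  intro U hU i _ j _
  simpa using entry_norm_bound_of_unitary hU i j

/-! ### Differentiation along a flow -/

section LieDeriv
variable {ι : Type*} [Fintype ι] [DecidableEq ι]

/-- `f'` is the derivative of `f` along the flow `U ↦ V t * U`, at every point and every time, and
both functions are continuous. -/
def HasFlowDeriv (V : ℝ → Matrix.unitaryGroup ι ℂ) (f f' : Matrix.unitaryGroup ι ℂ → ℂ) : Prop :=
  Continuous f ∧ Continuous f' ∧
    ∀ U t, HasDerivAt (fun s => f (V s * U)) (f' (V t * U)) t

lemma HasFlowDeriv.mul {V : ℝ → Matrix.unitaryGroup ι ℂ} {f f' g g' : Matrix.unitaryGroup ι ℂ → ℂ}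
    (hf : HasFlowDeriv V f f') (hg : HasFlowDeriv V g g') :
    HasFlowDeriv V (fun U => f U * g U) (fun U => f' U * g U + f U * g' U) :=
  ⟨hf.1.mul hg.1, (hf.2.1.mul hg.1).add (hf.1.mul hg.2.1), fun U t => (hf.2.2 U t).mul (hg.2.2 U t)⟩

lemma HasFlowDeriv.prod {V : ℝ → Matrix.unitaryGroup ι ℂ} {σ : Type*} [DecidableEq σ]
    (s : Finset σ) {f f' : σ → Matrix.unitaryGroup ι ℂ → ℂ}
    (hf : ∀ r, HasFlowDeriv V (f r) (f' r)) :
    HasFlowDeriv V (fun U => ∏ r ∈ s, f r U)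
      (fun U => ∑ r ∈ s, (∏ r' ∈ s.erase r, f r' U) * f' r U) :=
  ⟨continuous_finsetProd _ fun r _ => (hf r).1,
    continuous_finsetSum _ fun r _ =>
      (continuous_finsetProd _ fun r _ => (hf r).1).mul (hf r).2.1,
    fun U t => by
      simpa using HasDerivAt.fun_finsetProd (u := s) (fun r _ => (hf r).2.2 U t)⟩

/-- By left invariance `t ↦ ∫ f (V t * U)` is constant, so its derivative at `0` vanishes. The
derivative of the integrand is `f'` evaluated at `V t * U`, hence is bounded uniformly in `t` by the
maximum of `‖f'‖` on the compact group, which justifies differentiating under the integral. -/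
lemma HasFlowDeriv.integral_eq_zero {V : ℝ → Matrix.unitaryGroup ι ℂ}
    {f f' : Matrix.unitaryGroup ι ℂ → ℂ}
    (h : HasFlowDeriv V f f') (hV : V 0 = 1) (μ : Measure (Matrix.unitaryGroup ι ℂ))
    [μ.IsHaarMeasure] [IsProbabilityMeasure μ] : ∫ U, f' U ∂μ = 0 := by
  obtain ⟨hf, hf', hd⟩ := h
  obtain ⟨C, hC⟩ := isCompact_univ.exists_bound_of_continuousOn hf'.continuousOn
  have key := hasDerivAt_integral_of_dominated_loc_of_deriv_le (μ := μ) (𝕜 := ℝ) (x₀ := (0 : ℝ))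
    (s := Set.univ) (F := fun t U => f (V t * U)) (F' := fun t U => f' (V t * U))
    (bound := fun _ => C) Filter.univ_mem
    (Filter.Eventually.of_forall fun t =>
      (hf.comp (continuous_const.mul continuous_id)).aestronglyMeasurable)
    ((hf.comp (continuous_const.mul continuous_id)).integrable_of_hasCompactSupport
      (HasCompactSupport.of_compactSpace _))
    (hf'.comp (continuous_const.mul continuous_id)).aestronglyMeasurable
    (Filter.Eventually.of_forall fun U t _ => hC _ (Set.mem_univ _))
    (integrable_const C)
    (Filter.Eventually.of_forall fun U t _ => hd U t)
  have h2 := key.2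
  simp only [integral_mul_left_eq_self (μ := μ) f, hV, one_mul] at h2
  exact h2.unique (hasDerivAt_const _ _)

end LieDeriv

/-! ### The Schwinger–Dyson recursion for the moments of a column -/

section SchwingerDyson
variable {ι : Type*} [Fintype ι] [DecidableEq ι]

lemma integrable_of_continuous (μ : Measure (Matrix.unitaryGroup ι ℂ)) [IsProbabilityMeasure μ]
    {f : Matrix.unitaryGroup ι ℂ → ℂ} (hf : Continuous f) : Integrable f μ :=
  hf.integrable_of_hasCompactSupport (HasCompactSupport.of_compactSpace _)

@[fun_prop]
lemma continuous_entry (i c : ι) :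
    Continuous fun U : Matrix.unitaryGroup ι ℂ => (U : Matrix ι ι ℂ) i c :=
  continuous_subtype_val.matrix_elem i c

lemma sum_entry_mul_star (U : Matrix.unitaryGroup ι ℂ) (c : ι) :
    ∑ i, (U : Matrix ι ι ℂ) i c * star ((U : Matrix ι ι ℂ) i c) = 1 := by
  have h := congrFun (congrFun (Matrix.mem_unitaryGroup_iff'.1 U.2) c) c
  simpa [Matrix.mul_apply, mul_comm] using h

variable (μ : Measure (Matrix.unitaryGroup ι ℂ)) [μ.IsHaarMeasure] [IsProbabilityMeasure μ]
  {ρ σ : Type*} [Fintype ρ] [DecidableEq ρ] [Fintype σ] [DecidableEq σ]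

/-- The derivative of the monomial `∏ r, x (y r) * ∏ s, conj (x (j s))`, with `x` the column `c` of
`U`, in the direction `x ↦ A x`. The derivative of `conj x` is written as `-Aᵀ (conj x)`, which
agrees with `conj (A x)` for skew-Hermitian `A` and makes the expression complex linear in `A`. -/
def flowDeriv (c : ι) (y : ρ → ι) (j : σ → ι) (A : Matrix ι ι ℂ)
    (U : Matrix.unitaryGroup ι ℂ) : ℂ :=
  (∑ r, (∏ r' ∈ Finset.univ.erase r, U.1 (y r') c) * ∑ m, A (y r) m * U.1 m c) *
      (∏ s, star (U.1 (j s) c)) +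
    (∏ r, U.1 (y r) c) *
      ∑ s, (∏ s' ∈ Finset.univ.erase s, star (U.1 (j s') c)) * -∑ m, A m (j s) * star (U.1 m c)

lemma continuous_flowDeriv (c : ι) (y : ρ → ι) (j : σ → ι) (A : Matrix ι ι ℂ) :
    Continuous (flowDeriv c y j A) := by
  unfold flowDeriv
  have := continuous_entry (ι := ι)
  fun_prop

lemma integral_flowDeriv_skew (c : ι) (y : ρ → ι) (j : σ → ι) (A : Matrix ι ι ℂ) (hA : Aᴴ = -A) :
    ∫ U, flowDeriv c y j A U ∂μ = 0 := by
  obtain ⟨V, hV0, hV⟩ := exists_unitary_flow A hA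
  have hx : ∀ i, HasFlowDeriv V (fun U => U.1 i c) (fun U => ∑ m, A i m * U.1 m c) := by
    intro i
    refine ⟨continuous_entry i c, by fun_prop, fun U t => ?_⟩
    have h := HasDerivAt.fun_sum (u := Finset.univ)
      (fun k _ => (hV t i k).mul_const (U.1 k c))
    refine h.congr_deriv ?_
    symm
    change ∑ m, A i m * (V t * U).1 m c = ((A * (V t).1) * U.1) i c
    rw [Matrix.mul_assoc]; rfl
  have hxs : ∀ i, HasFlowDeriv V (fun U => star (U.1 i c))
      (fun U => -∑ m, A m i * star (U.1 m c)) := by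
    intro i
    refine ⟨by fun_prop, by fun_prop, fun U t => ?_⟩
    refine ((hx i).2.2 U t).star.congr_deriv ?_
    change _ = -∑ m, A m i * star ((V t * U).1 m c)
    rw [star_sum, ← Finset.sum_neg_distrib]
    refine Finset.sum_congr rfl fun m _ => ?_
    have := congrFun (congrFun hA m) i
    simp only [Matrix.conjTranspose_apply, Matrix.neg_apply] at this
    rw [star_mul', this, neg_mul]
  exact ((HasFlowDeriv.prod Finset.univ fun r => hx (y r)).mul
    (HasFlowDeriv.prod Finset.univ fun s => hxs (j s))).integral_eq_zero hV0 μ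

lemma flowDeriv_add (c : ι) (y : ρ → ι) (j : σ → ι) (A B : Matrix ι ι ℂ) (z : ℂ)
    (U : Matrix.unitaryGroup ι ℂ) :
    flowDeriv c y j (A + z • B) U = flowDeriv c y j A U + z * flowDeriv c y j B U := by
  simp only [flowDeriv, Matrix.add_apply, Matrix.smul_apply, smul_eq_mul, add_mul,
    Finset.sum_add_distrib, mul_add, neg_add, mul_neg, Finset.sum_neg_distrib, mul_assoc,
    ← Finset.mul_sum, mul_left_comm _ z]
  ring

/-- Every matrix is a complex combination of two skew-Hermitian ones. -/
lemma integral_flowDeriv (c : ι) (y : ρ → ι) (j : σ → ι) (A : Matrix ι ι ℂ) :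
    ∫ U, flowDeriv c y j A U ∂μ = 0 := by
  have hA : A = (2⁻¹ : ℂ) • (A - Aᴴ) + (-Complex.I) • ((Complex.I * 2⁻¹) • (A + Aᴴ)) := by
    ext i k
    simp only [Matrix.add_apply, Matrix.smul_apply, Matrix.sub_apply, smul_eq_mul]
    linear_combination (2⁻¹ * (A i k + Aᴴ i k)) * Complex.I_mul_I
  rw [hA]
  simp only [flowDeriv_add]
  rw [integral_add (integrable_of_continuous μ (continuous_flowDeriv c y j _))
    ((integrable_of_continuous μ (continuous_flowDeriv c y j _)).const_mul _),
    integral_const_mul, integral_flowDeriv_skew, integral_flowDeriv_skew]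
  · simp
  · rw [Matrix.conjTranspose_smul]
    simp [add_comm]
  · rw [Matrix.conjTranspose_smul]
    simp [← smul_neg]

/-- The monomial carries the extra factor `x_p`, indexed by `none`. Differentiating that factor gives
`N` copies of `x_q m m'` after summation over `p`, each of the other unconjugated factors gives one
more, and the conjugated factors equal to `conj x_q` are replaced by `∑ x_p conj x_p = 1`. -/
lemma sum_flowDeriv_single (c q : ι) (y : ρ → ι) (j : σ → ι) (U : Matrix.unitaryGroup ι ℂ) :
    ∑ p, flowDeriv c (fun r : Option ρ => r.elim p y) j (Matrix.single p q 1) U =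
      (Fintype.card ι + Fintype.card ρ) *
          (U.1 q c * (∏ r, U.1 (y r) c) * ∏ s, star (U.1 (j s) c)) -
        ∑ s, if j s = q then
          (∏ r, U.1 (y r) c) * ∏ s' ∈ Finset.univ.erase s, star (U.1 (j s') c) else 0 := by
  have e1 : ∀ r : ρ, (Finset.univ : Finset (Option ρ)).erase (some r) =
      Finset.insertNone (Finset.univ.erase r) := by
    intro r; ext x; cases x <;> simp
  have e0 : (Finset.univ : Finset (Option ρ)).erase none = Finset.univ.map .some := by
    ext x; cases x <;> simp
  have h1 : ∀ p i : ι, ∑ m, Matrix.single p q (1 : ℂ) i m * U.1 m c = if p = i then U.1 q c else 0 := by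
    intro p i
    simp [Matrix.single_apply, ite_and]
  have h2 : ∀ p i : ι, ∑ m, Matrix.single p q (1 : ℂ) m i * star (U.1 m c) =
      if i = q then star (U.1 p c) else 0 := by
    intro p i
    simp [Matrix.single_apply, ite_and, eq_comm]
  simp only [flowDeriv, h1, h2, Fintype.sum_option, Fintype.prod_option, e1, e0,
    Finset.prod_insertNone, Finset.prod_map, Option.elim, Function.Embedding.some_apply, if_true]
  rw [Finset.sum_add_distrib, ← Finset.sum_mul, Finset.sum_add_distrib, Finset.sum_comm]
  have h3 : ∀ r, ∑ p, (U.1 p c * ∏ x ∈ Finset.univ.erase r, U.1 (y x) c) *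
      (if p = y r then U.1 q c else 0) = (∏ r, U.1 (y r) c) * U.1 q c := by
    intro r
    simp [Finset.mul_prod_erase Finset.univ (fun r => U.1 (y r) c)]
  have h4 : ∑ p, (U.1 p c * ∏ r, U.1 (y r) c) *
      ∑ s, (∏ s' ∈ Finset.univ.erase s, star (U.1 (j s') c)) *
        -(if j s = q then star (U.1 p c) else 0) =
      - ∑ s, if j s = q then
          (∏ r, U.1 (y r) c) * ∏ s' ∈ Finset.univ.erase s, star (U.1 (j s') c) else 0 := by
    simp only [Finset.mul_sum]
    rw [Finset.sum_comm, ← Finset.sum_neg_distrib]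
    refine Finset.sum_congr rfl fun s _ => ?_
    split_ifs
    · have := sum_entry_mul_star U c
      calc _ = -((∏ r, U.1 (y r) c) * ∏ s' ∈ Finset.univ.erase s, star (U.1 (j s') c)) *
            ∑ i, (U : Matrix ι ι ℂ) i c * star ((U : Matrix ι ι ℂ) i c) := by
            rw [Finset.mul_sum]
            exact Finset.sum_congr rfl fun p _ => by ring
        _ = _ := by rw [this, mul_one]
    · simp
  rw [h4]
  simp only [h3, Finset.sum_const, Finset.card_univ, nsmul_eq_mul]
  ring

/-- The Wick-type recursion: `x_q` is contracted with each of the conjugated factors. -/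
theorem schwinger_dyson (c q : ι) (y : ρ → ι) (j : σ → ι) :
    ((Fintype.card ι : ℂ) + Fintype.card ρ) *
        ∫ U, U.1 q c * (∏ r, U.1 (y r) c) * ∏ s, star (U.1 (j s) c) ∂μ =
      ∫ U, ∑ s, (if j s = q then
        (∏ r, U.1 (y r) c) * ∏ s' ∈ Finset.univ.erase s, star (U.1 (j s') c) else 0) ∂μ := by
  have h0 : ∫ U, ∑ p, flowDeriv c (fun r : Option ρ => r.elim p y) j (Matrix.single p q 1) U ∂μ
      = 0 := by
    rw [integral_finsetSum _ fun p _ => integrable_of_continuous μ (continuous_flowDeriv ..)]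
    exact Finset.sum_eq_zero fun p _ => integral_flowDeriv μ ..
  have hc : ∀ s, Continuous fun U : Matrix.unitaryGroup ι ℂ => if j s = q then
      (∏ r, U.1 (y r) c) * ∏ s' ∈ Finset.univ.erase s, star (U.1 (j s') c) else 0 := by
    intro s
    split_ifs <;> fun_prop
  simp only [sum_flowDeriv_single] at h0
  rw [integral_sub, integral_const_mul, sub_eq_zero] at h0
  · exact h0
  · exact integrable_of_continuous μ (by fun_prop)
  · exact integrable_of_continuous μ (continuous_finsetSum _ fun s _ => hc s)

end SchwingerDyson

/-! ### Contractions of trace polynomials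

The contraction identities are purely algebraic: `w` stands for the entrywise conjugate of `x`, and
only `∑ x a k * w a k = 1` is used. -/

section Contractions
variable {α β : Type*} [Fintype α] [Fintype β] [DecidableEq α] [DecidableEq β]

/-- `Tr (X X*)²`, with `w` in place of the entrywise conjugate of the rectangular matrix `x`. -/
def tr2 (x w : α → β → ℂ) : ℂ :=
  ∑ a : α, ∑ b, ∑ k, ∑ l, x a k * w b k * x b l * w a l

/-- `Tr (X X*)³`, with `w` in place of the entrywise conjugate of the rectangular matrix `x`. -/
def tr3 (x w : α → β → ℂ) : ℂ :=
  ∑ a : α, ∑ b, ∑ c, ∑ k, ∑ l, ∑ m, x a k * w b k * x b l * w c l * x c m * w a m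

variable (x w : α → β → ℂ)

/-- Contracting `x a k` in `Tr (X X*)²` with either neighbouring factor leaves `Tr (X X*) = 1` and a
free index. -/
lemma contract_tr2 (h : ∑ a, ∑ k : β, x a k * w a k = 1) :
    ∑ a : α, ∑ b, ∑ k : β, ∑ l : β, ((if (b, k) = (a, k) then x b l * w a l else 0) +
        (if (a, l) = (a, k) then x b l * w b k else 0)) =
      (Fintype.card α : ℂ) + Fintype.card β := by
  have e1 : ∑ a : α, ∑ b, ∑ k : β, ∑ l : β, (if (b, k) = (a, k) then x b l * w a l else 0) =
      ∑ _k : β, ∑ a, ∑ l : β, x a l * w a l := by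
    simp only [← Fintype.sum_prod_type']
    simp only [← Finset.sum_filter]
    refine Finset.sum_nbij' (fun (a, b, k, l) => (k, a, l)) (fun (k, a, l) => (a, a, k, l))
        ?_ ?_ ?_ ?_ ?_ <;> simp +contextual
  have e2 : ∑ a : α, ∑ b, ∑ k : β, ∑ l : β, (if (a, l) = (a, k) then x b l * w b k else 0) =
      ∑ _a : α, ∑ b, ∑ l : β, x b l * w b l := by
    simp only [← Fintype.sum_prod_type']
    simp only [← Finset.sum_filter]
    refine Finset.sum_nbij' (fun (a, b, k, l) => (a, b, l)) (fun (a, b, l) => (a, b, l, l))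
        ?_ ?_ ?_ ?_ ?_ <;> simp +contextual
  simp only [Finset.sum_add_distrib, e1, e2, h]
  simp [add_comm]

/-- Contracting `x a k` in `Tr (X X*)³` with a neighbouring factor leaves `Tr (X X*)²` and a free
index; contracting it with the opposite factor leaves `(Tr X X*)² = 1`. -/
lemma contract_tr3 (h : ∑ a, ∑ k : β, x a k * w a k = 1) :
    ∑ a : α, ∑ b, ∑ c, ∑ k : β, ∑ l : β, ∑ m : β,
      ((if (b, k) = (a, k) then x b l * x c m * (w c l * w a m) else 0) +
        (if (c, l) = (a, k) then x b l * x c m * (w b k * w a m) else 0) +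
        (if (a, m) = (a, k) then x b l * x c m * (w b k * w c l) else 0)) =
      ((Fintype.card α : ℂ) + Fintype.card β) * tr2 x w + 1 := by
  have e1 : ∑ a : α, ∑ b, ∑ c, ∑ k : β, ∑ l : β, ∑ m : β,
      (if (b, k) = (a, k) then x b l * x c m * (w c l * w a m) else 0) =
      ∑ _k : β, tr2 x w := by
    simp only [tr2, ← Fintype.sum_prod_type']
    simp only [← Finset.sum_filter]
    refine Finset.sum_nbij' (fun (a, b, c, k, l, m) => (k, a, c, l, m))
        (fun (k, a, c, l, m) => (a, a, c, k, l, m)) ?_ ?_ ?_ ?_ ?_ <;> simp +contextual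
    intros; ring
  have e2 : ∑ a : α, ∑ b, ∑ c, ∑ k : β, ∑ l : β, ∑ m : β,
      (if (c, l) = (a, k) then x b l * x c m * (w b k * w a m) else 0) =
      (∑ a, ∑ k : β, x a k * w a k) * ∑ a, ∑ k : β, x a k * w a k := by
    simp only [Finset.sum_mul]
    simp only [Finset.mul_sum]
    simp only [← Fintype.sum_prod_type']
    simp only [← Finset.sum_filter]
    refine Finset.sum_nbij' (fun (a, b, c, k, l, m) => (b, k, a, m))
        (fun (b, k, a, m) => (a, b, a, k, k, m)) ?_ ?_ ?_ ?_ ?_ <;> simp +contextual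
    intros; ring
  have e3 : ∑ a : α, ∑ b, ∑ c, ∑ k : β, ∑ l : β, ∑ m : β,
      (if (a, m) = (a, k) then x b l * x c m * (w b k * w c l) else 0) =
      ∑ _a : α, tr2 x w := by
    simp only [tr2, ← Fintype.sum_prod_type']
    simp only [← Finset.sum_filter]
    refine Finset.sum_nbij' (fun (a, b, c, k, l, m) => (a, b, c, l, k))
        (fun (a, b, c, l, k) => (a, b, c, k, l, k)) ?_ ?_ ?_ ?_ ?_ <;> simp +contextual
    intros; ring
  simp only [Finset.sum_add_distrib, e1, e2, e3, h]
  simp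
  ring

/-- Contractions of `x a k` inside its own trace leave one factor `Tr (X X*)²` and a free index;
contractions with the other trace merge the two cycles into `Tr (X X*)³`. -/
lemma contract_tr2_mul_tr2 (h : ∑ a, ∑ k : β, x a k * w a k = 1) :
    ∑ a : α, ∑ b, ∑ k : β, ∑ l : β, ∑ a', ∑ b', ∑ k' : β, ∑ l' : β,
      ((if (b, k) = (a, k) then
          x b l * x a' k' * x b' l' * (w a l * w b' k' * w a' l') else 0) +
        (if (a, l) = (a, k) then
          x b l * x a' k' * x b' l' * (w b k * w b' k' * w a' l') else 0) +
        (if (b', k') = (a, k) then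
          x b l * x a' k' * x b' l' * (w b k * w a l * w a' l') else 0) +
        (if (a', l') = (a, k) then
          x b l * x a' k' * x b' l' * (w b k * w a l * w b' k') else 0)) =
      ((Fintype.card α : ℂ) + Fintype.card β) * tr2 x w + 2 * tr3 x w := by
  have e1 : ∑ a : α, ∑ b, ∑ k : β, ∑ l : β, ∑ a', ∑ b', ∑ k' : β, ∑ l' : β, (if (b, k) = (a, k) then
          x b l * x a' k' * x b' l' * (w a l * w b' k' * w a' l') else 0) =
      ∑ _k : β, (∑ a, ∑ l : β, x a l * w a l) * tr2 x w := by
    simp only [tr2, Finset.sum_mul]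
    simp only [Finset.mul_sum]
    simp only [← Fintype.sum_prod_type']
    simp only [← Finset.sum_filter]
    refine Finset.sum_nbij' (fun (a, b, k, l, z) => (k, a, l, z))
        (fun (k, a, l, z) => (a, a, k, l, z)) ?_ ?_ ?_ ?_ ?_ <;> simp +contextual
    intros; ring
  have e2 : ∑ a : α, ∑ b, ∑ k : β, ∑ l : β, ∑ a', ∑ b', ∑ k' : β, ∑ l' : β, (if (a, l) = (a, k) then
          x b l * x a' k' * x b' l' * (w b k * w b' k' * w a' l') else 0) =
      ∑ _a : α, (∑ b, ∑ l : β, x b l * w b l) * tr2 x w := by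
    simp only [tr2, Finset.sum_mul]
    simp only [Finset.mul_sum]
    simp only [← Fintype.sum_prod_type']
    simp only [← Finset.sum_filter]
    refine Finset.sum_nbij' (fun (a, b, k, l, z) => (a, b, l, z))
        (fun (a, b, l, z) => (a, b, l, l, z)) ?_ ?_ ?_ ?_ ?_ <;> simp +contextual
    intros; ring
  have e3 : ∑ a : α, ∑ b, ∑ k : β, ∑ l : β, ∑ a', ∑ b', ∑ k' : β, ∑ l' : β, (if (b', k') = (a, k) then
          x b l * x a' k' * x b' l' * (w b k * w a l * w a' l') else 0) = tr3 x w := by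
    simp only [tr3, ← Fintype.sum_prod_type']
    simp only [← Finset.sum_filter]
    -- the surviving word is `x b l * w a l * x a l' * w a' l' * x a' k * w b k`
    refine Finset.sum_nbij' (fun (a, b, k, l, a', b', k', l') => (b, a, a', l, l', k))
        (fun (b, a, a', l, l', k) => (a, b, k, l, a', a, k, l')) ?_ ?_ ?_ ?_ ?_ <;>
      simp +contextual
    intros; ring
  have e4 : ∑ a : α, ∑ b, ∑ k : β, ∑ l : β, ∑ a', ∑ b', ∑ k' : β, ∑ l' : β, (if (a', l') = (a, k) then
          x b l * x a' k' * x b' l' * (w b k * w a l * w b' k') else 0) = tr3 x w := by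
    simp only [tr3, ← Fintype.sum_prod_type']
    simp only [← Finset.sum_filter]
    -- the surviving word is `x b l * w a l * x a k' * w b' k' * x b' k * w b k`
    refine Finset.sum_nbij' (fun (a, b, k, l, a', b', k', l') => (b, a, b', l, k', k))
        (fun (b, a, b', l, k', k) => (a, b, k, l, a, b', k', k)) ?_ ?_ ?_ ?_ ?_ <;>
      simp +contextual
    intros; ring
  simp only [Finset.sum_add_distrib, e1, e2, e3, e4, h]
  simp
  ring

end Contractions

/-! ### The recursion in low degree -/

section Moments
variable {ι : Type*} [Fintype ι] [DecidableEq ι]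
  (μ : Measure (Matrix.unitaryGroup ι ℂ)) [μ.IsHaarMeasure] [IsProbabilityMeasure μ]

lemma univ_erase_fin_two : (Finset.univ.erase (0 : Fin 2) = {1}) ∧
    (Finset.univ.erase (1 : Fin 2) = {0}) := by decide

lemma univ_erase_fin_three : (Finset.univ.erase (0 : Fin 3) = {1, 2}) ∧
    (Finset.univ.erase (1 : Fin 3) = {0, 2}) ∧ (Finset.univ.erase (2 : Fin 3) = {0, 1}) := by decide

lemma univ_erase_fin_four : (Finset.univ.erase (0 : Fin 4) = {1, 2, 3}) ∧
    (Finset.univ.erase (1 : Fin 4) = {0, 2, 3}) ∧ (Finset.univ.erase (2 : Fin 4) = {0, 1, 3}) ∧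
    (Finset.univ.erase (3 : Fin 4) = {0, 1, 2}) := by decide

lemma schwinger_dyson_two (c q i j₀ j₁ : ι) :
    ((Fintype.card ι : ℂ) + 1) *
        ∫ U, U.1 q c * star (U.1 j₀ c) * U.1 i c * star (U.1 j₁ c) ∂μ =
      ∫ U, ((if j₀ = q then U.1 i c * star (U.1 j₁ c) else 0) +
        (if j₁ = q then U.1 i c * star (U.1 j₀ c) else 0)) ∂μ := by
  have h := schwinger_dyson μ c q ![i] ![j₀, j₁]
  simp only [Fin.sum_univ_two, Fin.prod_univ_one, Fin.prod_univ_two, univ_erase_fin_two] at h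
  convert h using 3
  · simp
  · funext U
    simp
    ring
  · simp

lemma schwinger_dyson_three (c q i₀ i₁ j₀ j₁ j₂ : ι) :
    ((Fintype.card ι : ℂ) + 2) *
        ∫ U, U.1 q c * star (U.1 j₀ c) * U.1 i₀ c * star (U.1 j₁ c) * U.1 i₁ c *
          star (U.1 j₂ c) ∂μ =
      ∫ U, ((if j₀ = q then U.1 i₀ c * U.1 i₁ c * (star (U.1 j₁ c) * star (U.1 j₂ c)) else 0) +
        (if j₁ = q then U.1 i₀ c * U.1 i₁ c * (star (U.1 j₀ c) * star (U.1 j₂ c)) else 0) +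
        (if j₂ = q then U.1 i₀ c * U.1 i₁ c * (star (U.1 j₀ c) * star (U.1 j₁ c)) else 0)) ∂μ := by
  have h := schwinger_dyson μ c q ![i₀, i₁] ![j₀, j₁, j₂]
  simp only [Fin.sum_univ_three, Fin.prod_univ_two, Fin.prod_univ_three, univ_erase_fin_three] at h
  convert h using 3
  · simp
  · funext U
    simp
    ring
  · simp [mul_assoc]

lemma schwinger_dyson_four (c q i₀ i₁ i₂ j₀ j₁ j₂ j₃ : ι) :
    ((Fintype.card ι : ℂ) + 3) *
        ∫ U, U.1 q c * star (U.1 j₀ c) * U.1 i₀ c * star (U.1 j₁ c) *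
          (U.1 i₁ c * star (U.1 j₂ c) * U.1 i₂ c * star (U.1 j₃ c)) ∂μ =
      ∫ U, ((if j₀ = q then U.1 i₀ c * U.1 i₁ c * U.1 i₂ c *
            (star (U.1 j₁ c) * star (U.1 j₂ c) * star (U.1 j₃ c)) else 0) +
        (if j₁ = q then U.1 i₀ c * U.1 i₁ c * U.1 i₂ c *
            (star (U.1 j₀ c) * star (U.1 j₂ c) * star (U.1 j₃ c)) else 0) +
        (if j₂ = q then U.1 i₀ c * U.1 i₁ c * U.1 i₂ c *
            (star (U.1 j₀ c) * star (U.1 j₁ c) * star (U.1 j₃ c)) else 0) +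
        (if j₃ = q then U.1 i₀ c * U.1 i₁ c * U.1 i₂ c *
            (star (U.1 j₀ c) * star (U.1 j₁ c) * star (U.1 j₂ c)) else 0)) ∂μ := by
  have h := schwinger_dyson μ c q ![i₀, i₁, i₂] ![j₀, j₁, j₂, j₃]
  simp only [Fin.sum_univ_four, Fin.prod_univ_three, Fin.prod_univ_four, univ_erase_fin_four] at h
  convert h using 3
  · simp
  · funext U
    simp
    ring
  · simp [mul_assoc]

end Moments

/-! ### Recursion for the trace moments of the reduced state -/

section Recursion

lemma mul_integral_sum {G Z : Type*} [Fintype Z] [MeasurableSpace G] (μ : Measure G) (K : ℂ)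
    {f g : Z → G → ℂ} (hf : ∀ z, Integrable (f z) μ) (hg : ∀ z, Integrable (g z) μ)
    (h : ∀ z, K * ∫ U, f z U ∂μ = ∫ U, g z U ∂μ) :
    K * ∫ U, ∑ z, f z U ∂μ = ∫ U, ∑ z, g z U ∂μ := by
  rw [integral_finsetSum _ fun z _ => hf z, integral_finsetSum _ fun z _ => hg z, Finset.mul_sum]
  exact Finset.sum_congr rfl fun z _ => h z

lemma continuous_ite_zero {X : Type*} [TopologicalSpace X] (P : Prop) [Decidable P] {f : X → ℂ}
    (hf : Continuous f) : Continuous fun U => if P then f U else 0 := by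
  split_ifs
  · exact hf
  · exact continuous_const

variable {d₁ d₂ : ℕ}

/-- Column `c` of `U` reshaped as a `d₁ × d₂` matrix. -/
def colX (c : Fin (d₁ * d₂)) (U : Matrix.unitaryGroup (Fin (d₁ * d₂)) ℂ) :
    Fin d₁ → Fin d₂ → ℂ :=
  fun a k => U.1 (finProdFinEquiv (a, k)) c

/-- The entrywise conjugate of `colX c U`. -/
def colW (c : Fin (d₁ * d₂)) (U : Matrix.unitaryGroup (Fin (d₁ * d₂)) ℂ) :
    Fin d₁ → Fin d₂ → ℂ :=
  fun a k => star (U.1 (finProdFinEquiv (a, k)) c)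

@[fun_prop]
lemma continuous_colX (c : Fin (d₁ * d₂)) (a : Fin d₁) (k : Fin d₂) :
    Continuous fun U => colX c U a k := continuous_entry _ _

@[fun_prop]
lemma continuous_colW (c : Fin (d₁ * d₂)) (a : Fin d₁) (k : Fin d₂) :
    Continuous fun U => colW c U a k := (continuous_entry _ _).star

lemma sum_colX_mul_colW (c : Fin (d₁ * d₂)) (U : Matrix.unitaryGroup (Fin (d₁ * d₂)) ℂ) :
    ∑ a, ∑ k, colX c U a k * colW c U a k = 1 := by
  rw [← Fintype.sum_prod_type', ← sum_entry_mul_star U c,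
    ← Equiv.sum_comp finProdFinEquiv]
  rfl

lemma trace_rho_mul_rho (c : Fin (d₁ * d₂)) (U : Matrix.unitaryGroup (Fin (d₁ * d₂)) ℂ) :
    Matrix.trace (rho U c * rho U c) = tr2 (colX c U) (colW c U) := by
  simp only [Matrix.trace, Matrix.diag, Matrix.mul_apply, rho, Matrix.of_apply, tr2, colX, colW,
    Finset.sum_mul, Complex.star_def]
  simp only [Finset.mul_sum]
  refine Finset.sum_congr rfl fun a _ => Finset.sum_congr rfl fun b _ =>
    Finset.sum_congr rfl fun k _ => Finset.sum_congr rfl fun l _ => by ring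

variable (μ : Measure (Matrix.unitaryGroup (Fin (d₁ * d₂)) ℂ)) [μ.IsHaarMeasure]
  [IsProbabilityMeasure μ] (c : Fin (d₁ * d₂))

lemma integral_tr2 : ((d₁ : ℂ) * d₂ + 1) * ∫ U, tr2 (colX c U) (colW c U) ∂μ = d₁ + d₂ := by
  have h : ((d₁ : ℂ) * d₂ + 1) * ∫ U, tr2 (colX c U) (colW c U) ∂μ =
      ∫ _U, ((Fintype.card (Fin d₁) : ℂ) + Fintype.card (Fin d₂)) ∂μ := by
    rw [show (fun _ : Matrix.unitaryGroup (Fin (d₁ * d₂)) ℂ =>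
      (Fintype.card (Fin d₁) : ℂ) + Fintype.card (Fin d₂)) = _ from
        funext fun U => (contract_tr2 _ _ (sum_colX_mul_colW c U)).symm]
    simp only [tr2]
    simp only [← Fintype.sum_prod_type']
    refine mul_integral_sum μ _ (fun _ => integrable_of_continuous μ (by fun_prop))
      (fun _ => integrable_of_continuous μ ((continuous_ite_zero _ (by fun_prop)).add
        (continuous_ite_zero _ (by fun_prop)))) ?_
    rintro ⟨a, b, k, l⟩
    have := schwinger_dyson_two μ c (finProdFinEquiv (a, k)) (finProdFinEquiv (b, l))
      (finProdFinEquiv (b, k)) (finProdFinEquiv (a, l))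
    simp only [EmbeddingLike.apply_eq_iff_eq, Fintype.card_fin, Nat.cast_mul] at this
    exact this
  simpa using h

lemma integral_tr3 : ((d₁ : ℂ) * d₂ + 2) * ∫ U, tr3 (colX c U) (colW c U) ∂μ =
    (d₁ + d₂) * ∫ U, tr2 (colX c U) (colW c U) ∂μ + 1 := by
  have h : ((d₁ : ℂ) * d₂ + 2) * ∫ U, tr3 (colX c U) (colW c U) ∂μ =
      ∫ U, (((Fintype.card (Fin d₁) : ℂ) + Fintype.card (Fin d₂)) *
        tr2 (colX c U) (colW c U) + 1) ∂μ := by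
    simp_rw [← fun U => contract_tr3 _ _ (sum_colX_mul_colW c U)]
    simp only [tr3]
    simp only [← Fintype.sum_prod_type']
    refine mul_integral_sum μ _ (fun _ => integrable_of_continuous μ (by fun_prop))
      (fun _ => integrable_of_continuous μ (((continuous_ite_zero _ (by fun_prop)).add
        (continuous_ite_zero _ (by fun_prop))).add (continuous_ite_zero _ (by fun_prop)))) ?_
    rintro ⟨a, b, c', k, l, m⟩
    have := schwinger_dyson_three μ c (finProdFinEquiv (a, k)) (finProdFinEquiv (b, l))
      (finProdFinEquiv (c', m)) (finProdFinEquiv (b, k)) (finProdFinEquiv (c', l))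
      (finProdFinEquiv (a, m))
    simp only [EmbeddingLike.apply_eq_iff_eq, Fintype.card_fin, Nat.cast_mul] at this
    exact this
  rw [h, integral_add (integrable_of_continuous μ (by unfold tr2; fun_prop)) (integrable_const _),
    integral_const_mul]
  simp

lemma integral_tr2_mul_tr2 :
    ((d₁ : ℂ) * d₂ + 3) * ∫ U, tr2 (colX c U) (colW c U) * tr2 (colX c U) (colW c U) ∂μ =
    (d₁ + d₂) * ∫ U, tr2 (colX c U) (colW c U) ∂μ + 2 * ∫ U, tr3 (colX c U) (colW c U) ∂μ := by
  have h : ((d₁ : ℂ) * d₂ + 3) *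
        ∫ U, tr2 (colX c U) (colW c U) * tr2 (colX c U) (colW c U) ∂μ =
      ∫ U, (((Fintype.card (Fin d₁) : ℂ) + Fintype.card (Fin d₂)) *
        tr2 (colX c U) (colW c U) + 2 * tr3 (colX c U) (colW c U)) ∂μ := by
    simp_rw [← fun U => contract_tr2_mul_tr2 _ _ (sum_colX_mul_colW c U)]
    simp only [tr2, Finset.sum_mul]
    simp only [Finset.mul_sum]
    simp only [← Fintype.sum_prod_type']
    refine mul_integral_sum μ _ (fun _ => integrable_of_continuous μ (by fun_prop))
      (fun _ => integrable_of_continuous μ ((((continuous_ite_zero _ (by fun_prop)).add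
        (continuous_ite_zero _ (by fun_prop))).add (continuous_ite_zero _ (by fun_prop))).add
        (continuous_ite_zero _ (by fun_prop)))) ?_
    rintro ⟨a, b, k, l, a', b', k', l'⟩
    have := schwinger_dyson_four μ c (finProdFinEquiv (a, k)) (finProdFinEquiv (b, l))
      (finProdFinEquiv (a', k')) (finProdFinEquiv (b', l')) (finProdFinEquiv (b, k))
      (finProdFinEquiv (a, l)) (finProdFinEquiv (b', k')) (finProdFinEquiv (a', l'))
    simp only [EmbeddingLike.apply_eq_iff_eq, Fintype.card_fin, Nat.cast_mul] at this
    exact this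
  rw [h, integral_add (integrable_of_continuous μ (by unfold tr2; fun_prop))
    (integrable_of_continuous μ (by unfold tr3; fun_prop)), integral_const_mul, integral_const_mul]
  simp

end Recursion

/-- `E[(Tr ρ₀²)²]` for a Haar-random unitary of size `d₁d₂`. -/
theorem stmt2 (d₁ d₂ : ℕ) (hd₁ : 0 < d₁) (hd₂ : 0 < d₂)
    (μ : Measure (Matrix.unitaryGroup (Fin (d₁ * d₂)) ℂ))
    [μ.IsHaarMeasure] [IsProbabilityMeasure μ] :
    ∫ U, (Matrix.trace (rho U ⟨0, Nat.mul_pos hd₁ hd₂⟩ * rho U ⟨0, Nat.mul_pos hd₁ hd₂⟩)) ^ 2 ∂μ =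
      ((d₂ : ℂ) * d₁ ^ 3 + 2 * ((d₂ : ℂ) ^ 2 + 2) * d₁ ^ 2 + d₂ * ((d₂ : ℂ) ^ 2 + 10) * d₁
          + 4 * (d₂ : ℂ) ^ 2 + 2) /
        (((d₁ : ℂ) * d₂ + 1) * ((d₁ : ℂ) * d₂ + 2) * ((d₁ : ℂ) * d₂ + 3)) := by
  have h2 := integral_tr2 μ ⟨0, Nat.mul_pos hd₁ hd₂⟩
  have h3 := integral_tr3 μ ⟨0, Nat.mul_pos hd₁ hd₂⟩
  have h4 := integral_tr2_mul_tr2 μ ⟨0, Nat.mul_pos hd₁ hd₂⟩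
  have hne : ∀ n : ℕ, (d₁ : ℂ) * d₂ + (n + 1 : ℕ) ≠ 0 := fun n => by
    rw [← Nat.cast_mul, ← Nat.cast_add]
    exact Nat.cast_ne_zero.2 (by omega)
  have n1 := hne 0
  have n2 := hne 1
  have n3 := hne 2
  push_cast at n1 n2 n3
  norm_num at n1 n2 n3
  simp only [trace_rho_mul_rho, pow_two (tr2 _ _)]
  rw [eq_div_iff (by simp [n1, n2, n3])]
  -- eliminates the second and third trace moments from the triangular system `h2`, `h3`, `h4`
  linear_combination ((d₁ : ℂ) * d₂ + 1) * ((d₁ : ℂ) * d₂ + 2) * h4 +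
    2 * ((d₁ : ℂ) * d₂ + 1) * h3 + ((d₁ : ℂ) + d₂) * ((d₁ : ℂ) * d₂ + 4) * h2
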